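/- Let κ be a (P,ρ)-kernel on a locally finite weakly ranked poset (P,ρ), with right KLS function f, left KLS function g, and Chow function ℋ. If either f is non-negative (every coefficient of every f_{st}(x) is ≥ 0) or g is non-negative, then for every s ≤ t in P the polynomial ℋ_{st}(x) has non-negative coefficients and its coefficient sequence is unimodal. -/

import Mathlib

/-!
At `x = 1` a kernel becomes `δ`, so `κ = (x-1) κ̄ + x δ`. Then `f^rev = κ f` reads
`f^rev - x f = (x-1) κ̄ f`, and multiplication by `ℋ = -κ̄⁻¹` gives `ℋ (f^rev - x f) = (1-x) f`.
Solved for `ℋ_{st}` with `s < t`, this is the recursion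

`ℋ_{st} = (f^rev_{st} - f_{st})/(x-1) + ∑_{s<w<t} ℋ_{sw} (f^rev_{wt} - x f_{wt})/(x-1)`.

When `f` is non-negative, both kinds of quotients are sums of strings `x^m + ⋯ + x^(n-1)` with a
common centre, namely `(ρ_{st}-1)/2` and `ρ_{wt}/2` respectively. By the Clebsch–Gordan rule a
product of two strings is a sum of strings centred at the sum of the two centres, so by induction
`ℋ_{st}` is a sum of strings centred at `(ρ_{st}-1)/2`; such sums are non-negative and unimodal.

Passing to the dual poset turns `g` into a right KLS function.
-/

open Finset Polynomial
open scoped Classical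

noncomputable section

variable {α : Type*}

/-- Convolution product in the incidence algebra of a locally finite poset over `ℤ[x]`.
Only the values on intervals `s ≤ t` are relevant. -/
def conv [PartialOrder α] [LocallyFiniteOrder α] (a b : α → α → Polynomial ℤ) :
    α → α → Polynomial ℤ :=
  fun s t => ∑ w ∈ Finset.Icc s t, a s w * b w t

/-- The identity `δ` of the incidence algebra. -/
def dlt [PartialOrder α] : α → α → Polynomial ℤ :=
  fun s t => if s = t then 1 else 0

/-- The involution `a ↦ a^rev`, given by `(a^rev)_{st}(x) = x^{ρ_{st}} a_{st}(1/x)`. -/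
def rev (ρ : α → α → ℕ) (a : α → α → Polynomial ℤ) : α → α → Polynomial ℤ :=
  fun s t => (a s t).reflect (ρ s t)

/-- A weak rank function on a poset. -/
structure IsWeakRank [Preorder α] (ρ : α → α → ℕ) : Prop where
  pos : ∀ ⦃s t : α⦄, s < t → 0 < ρ s t
  add : ∀ ⦃s w t : α⦄, s ≤ w → w ≤ t → ρ s t = ρ s w + ρ w t

/-- `κ` is a `(P,ρ)`-kernel: it lies in `I_ρ(P)`, is `1` on the diagonal, and `κ⁻¹ = κ^rev`. -/
structure IsKernel [PartialOrder α] [LocallyFiniteOrder α] (ρ : α → α → ℕ)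
    (κ : α → α → Polynomial ℤ) : Prop where
  degLE : ∀ ⦃s t : α⦄, s ≤ t → (κ s t).natDegree ≤ ρ s t
  diag : ∀ s : α, κ s s = 1
  left : ∀ ⦃s t : α⦄, s ≤ t → conv (rev ρ κ) κ s t = dlt s t
  right : ∀ ⦃s t : α⦄, s ≤ t → conv κ (rev ρ κ) s t = dlt s t

/-- The reduced kernel `κ̄`: `κ̄_{st} = κ_{st}/(x-1)` for `s < t` and `κ̄_{ss} = -1`. -/
def red [PartialOrder α] (κ : α → α → Polynomial ℤ) : α → α → Polynomial ℤ :=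
  fun s t => if s = t then -1 else κ s t /ₘ (X - 1)

/-- `H` is the Chow function of `κ`, i.e. `H = -(κ̄)⁻¹`. -/
structure IsChow [PartialOrder α] [LocallyFiniteOrder α] (κ H : α → α → Polynomial ℤ) : Prop where
  left : ∀ ⦃s t : α⦄, s ≤ t → conv (red κ) H s t = -dlt s t
  right : ∀ ⦃s t : α⦄, s ≤ t → conv H (red κ) s t = -dlt s t

/-- `f` is the right KLS function of the kernel `κ`. -/
structure IsRightKLS [PartialOrder α] [LocallyFiniteOrder α] (ρ : α → α → ℕ)
    (κ f : α → α → Polynomial ℤ) : Prop where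
  diag : ∀ s : α, f s s = 1
  degLT : ∀ ⦃s t : α⦄, s < t → 2 * (f s t).natDegree < ρ s t
  rev_eq : ∀ ⦃s t : α⦄, s ≤ t → rev ρ f s t = conv κ f s t

/-- `g` is the left KLS function of the kernel `κ`. -/
structure IsLeftKLS [PartialOrder α] [LocallyFiniteOrder α] (ρ : α → α → ℕ)
    (κ g : α → α → Polynomial ℤ) : Prop where
  diag : ∀ s : α, g s s = 1
  degLT : ∀ ⦃s t : α⦄, s < t → 2 * (g s t).natDegree < ρ s t
  rev_eq : ∀ ⦃s t : α⦄, s ≤ t → rev ρ g s t = conv g κ s t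

/-- `p` is symmetric with center of symmetry `d/2`, i.e. `p(x) = x^d p(1/x)`. -/
def PolySymm (d : ℕ) (p : Polynomial ℤ) : Prop := p.natDegree ≤ d ∧ p.reflect d = p

/-- All coefficients of `p` are non-negative. -/
def PolyNonneg (p : Polynomial ℤ) : Prop := ∀ n, 0 ≤ p.coeff n

/-- The coefficient sequence of `p` is unimodal. -/
def PolyUnimodal (p : Polynomial ℤ) : Prop :=
  ∃ j, (∀ i < j, p.coeff i ≤ p.coeff (i + 1)) ∧ ∀ i, j ≤ i → p.coeff (i + 1) ≤ p.coeff i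

end


section SymmUnimodal

/-- The additive monoid generated by the strings `x^m + x^(m+1) + ⋯ + x^(n-1)` with `m + n = d + 1`,
which are symmetric about `d / 2`; it consists of the symmetric unimodal polynomials with
non-negative coefficients and centre of symmetry `d / 2`. For `n ≤ m` the string is `0`. -/
noncomputable def symmUnimodalCone (d : ℕ) : AddSubmonoid ℤ[X] :=
  AddSubmonoid.closure {p | ∃ m n : ℕ, m + n = d + 1 ∧ p = ∑ i ∈ Ico m n, X ^ i}

theorem sum_Ico_X_pow_mem_symmUnimodalCone {d m n : ℕ} (h : m + n = d + 1) :
    (∑ i ∈ Ico m n, X ^ i : ℤ[X]) ∈ symmUnimodalCone d :=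
  AddSubmonoid.subset_closure ⟨m, n, h, rfl⟩

theorem one_mem_symmUnimodalCone_zero : 1 ∈ symmUnimodalCone 0 := by
  simpa using sum_Ico_X_pow_mem_symmUnimodalCone (zero_add 1)

theorem C_mul_mem_symmUnimodalCone {d : ℕ} {c : ℤ} (hc : 0 ≤ c) {p : ℤ[X]}
    (hp : p ∈ symmUnimodalCone d) : C c * p ∈ symmUnimodalCone d := by
  lift c to ℕ using hc
  simpa [nsmul_eq_mul] using nsmul_mem hp c

/-- The string of length `n - m` times the string of length `q + 1 - p` is one long string plus a
product of strings that are both shorter by one: the Clebsch–Gordan rule. -/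
theorem sum_Ico_pow_mul_sum_Ico_succ_pow {R : Type*} [CommSemiring R] (x : R) {m n p q : ℕ}
    (hmn : m < n) (hpq : p ≤ q) :
    (∑ i ∈ Ico m n, x ^ i) * ∑ j ∈ Ico p (q + 1), x ^ j =
      ∑ i ∈ Ico (m + p) (n + q), x ^ i +
        (∑ i ∈ Ico (m + 1) n, x ^ i) * ∑ j ∈ Ico p q, x ^ j := by
  have shift (k a b : ℕ) : x ^ k * ∑ i ∈ Ico a b, x ^ i = ∑ i ∈ Ico (k + a) (k + b), x ^ i := by
    simp only [mul_sum, ← pow_add]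
    rw [add_comm k a, add_comm k b, ← sum_Ico_add (fun i => x ^ i)]
  calc (∑ i ∈ Ico m n, x ^ i) * ∑ j ∈ Ico p (q + 1), x ^ j
      = x ^ m * ∑ j ∈ Ico p (q + 1), x ^ j + x ^ q * ∑ i ∈ Ico (m + 1) n, x ^ i +
          (∑ i ∈ Ico (m + 1) n, x ^ i) * ∑ j ∈ Ico p q, x ^ j := by
        rw [sum_eq_sum_Ico_succ_bot hmn, sum_Ico_succ_top hpq]
        ring
    _ = _ := by
        rw [shift, shift, ← sum_Ico_consecutive _ (show m + p ≤ m + (q + 1) by lia)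
          (show m + (q + 1) ≤ n + q by lia), add_comm q n, show q + (m + 1) = m + (q + 1) by ring]

theorem sum_Ico_mul_sum_Ico_mem_symmUnimodalCone {d : ℕ} (m n p q : ℕ)
    (h : m + n + (p + q) = d + 2) :
    ((∑ i ∈ Ico m n, X ^ i) * ∑ j ∈ Ico p q, X ^ j : ℤ[X]) ∈ symmUnimodalCone d := by
  induction q generalizing m with
  | zero => simp
  | succ q ih =>
    rcases le_or_gt n m with hnm | hmn
    · simp [Ico_eq_empty_of_le hnm]
    rcases lt_or_ge q p with hqp | hpq
    · simp [Ico_eq_empty_of_le (Nat.succ_le_of_lt hqp)]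
    · rw [sum_Ico_pow_mul_sum_Ico_succ_pow X hmn hpq]
      exact add_mem (sum_Ico_X_pow_mem_symmUnimodalCone (by lia)) (ih (m + 1) (by lia))

open scoped Pointwise in
theorem mul_mem_symmUnimodalCone {d e : ℕ} {p q : ℤ[X]} (hp : p ∈ symmUnimodalCone d)
    (hq : q ∈ symmUnimodalCone e) : p * q ∈ symmUnimodalCone (d + e) := by
  have h : symmUnimodalCone d * symmUnimodalCone e ≤ symmUnimodalCone (d + e) := by
    unfold symmUnimodalCone
    rw [AddSubmonoid.closure_mul_closure, AddSubmonoid.closure_le]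
    rintro _ ⟨_, ⟨m, n, hmn, rfl⟩, _, ⟨m', n', hmn', rfl⟩, rfl⟩
    exact sum_Ico_mul_sum_Ico_mem_symmUnimodalCone m n m' n' (by lia)
  exact h (AddSubmonoid.mul_mem_mul hp hq)

theorem coeff_sum_Ico_X_pow {R : Type*} [Semiring R] (m n k : ℕ) :
    (∑ i ∈ Ico m n, X ^ i : R[X]).coeff k = if k ∈ Ico m n then 1 else 0 := by
  simp [coeff_X_pow]

theorem polyNonneg_and_polyUnimodal_of_mem_symmUnimodalCone {d : ℕ} {p : ℤ[X]}
    (hp : p ∈ symmUnimodalCone d) : PolyNonneg p ∧ PolyUnimodal p := by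
  -- Sums of unimodal sequences need not be unimodal, unless the mode is common to all of them.
  suffices h : (∀ k, 0 ≤ p.coeff k) ∧ (∀ k < d / 2, p.coeff k ≤ p.coeff (k + 1)) ∧
      ∀ k, d / 2 ≤ k → p.coeff (k + 1) ≤ p.coeff k from ⟨h.1, d / 2, h.2⟩
  induction hp using AddSubmonoid.closure_induction with
  | zero => simp
  | add p q _ _ hp hq =>
    simp only [coeff_add]
    exact ⟨fun k => add_nonneg (hp.1 k) (hq.1 k),
      fun k hk => add_le_add (hp.2.1 k hk) (hq.2.1 k hk),
      fun k hk => add_le_add (hp.2.2 k hk) (hq.2.2 k hk)⟩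
  | mem p hp =>
    obtain ⟨m, n, hmn, rfl⟩ := hp
    simp only [coeff_sum_Ico_X_pow, mem_Ico]
    refine ⟨fun k => ?_, fun k hk => ?_, fun k hk => ?_⟩ <;> split_ifs <;> lia

end SymmUnimodal

section Reflect

theorem sub_one_mul_sum_Ico_pow {R : Type*} [Ring R] (x : R) {m n : ℕ} (h : m ≤ n) :
    (x - 1) * ∑ i ∈ Ico m n, x ^ i = x ^ n - x ^ m := by
  simp only [mul_sum, sub_one_mul, ← pow_succ', sum_Ico_sub _ h]

theorem eval_one_reflect {R : Type*} [CommSemiring R] {N : ℕ} {p : R[X]} (h : p.natDegree ≤ N) :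
    (p.reflect N).eval 1 = p.eval 1 := by
  let _ : Invertible (1 : R) := invertibleOne
  simpa [eval₂_id] using eval₂_reflect_mul_pow (RingHom.id R) 1 N p h

theorem reflect_eq_sum_range {R : Type*} [Semiring R] (N : ℕ) (p : R[X]) :
    p.reflect N = ∑ i ∈ range (p.natDegree + 1), C (p.coeff i) * X ^ revAt N i := by
  let reflectHom : R[X] →+ R[X] := ⟨⟨reflect N, reflect_zero⟩, fun p q => reflect_add p q N⟩
  calc p.reflect N = reflectHom (∑ i ∈ range (p.natDegree + 1), C (p.coeff i) * X ^ i) :=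
        congrArg (reflect N) p.as_sum_range_C_mul_X_pow
    _ = _ := (map_sum reflectHom _ _).trans (sum_congr rfl fun i _ => reflect_C_mul_X_pow N i)

/-- Each monomial `x^i` of `p` contributes `(x^(r-i) - x^(i+e)) / (x - 1)`, which is the string from
`x^(i+e)` to `x^(r-i-1)`. -/
theorem exists_mem_symmUnimodalCone_sub_one_mul_eq {p : ℤ[X]} (hp : PolyNonneg p) {d e r : ℕ}
    (hdeg : 2 * p.natDegree + e ≤ r) (hd : r + e = d + 1) :
    ∃ q ∈ symmUnimodalCone d, (X - 1) * q = p.reflect r - X ^ e * p := by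
  refine ⟨∑ i ∈ range (p.natDegree + 1), C (p.coeff i) * ∑ j ∈ Ico (i + e) (r - i), X ^ j,
    sum_mem fun i hi => ?_, ?_⟩
  · have := mem_range.1 hi
    exact C_mul_mem_symmUnimodalCone (hp i) (sum_Ico_X_pow_mem_symmUnimodalCone (by lia))
  calc (X - 1) * ∑ i ∈ range (p.natDegree + 1), C (p.coeff i) * ∑ j ∈ Ico (i + e) (r - i), X ^ j
      = ∑ i ∈ range (p.natDegree + 1),
          (C (p.coeff i) * X ^ revAt r i - X ^ e * (C (p.coeff i) * X ^ i)) := by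
        rw [mul_sum]
        refine sum_congr rfl fun i hi => ?_
        have := mem_range.1 hi
        rw [mul_left_comm, sub_one_mul_sum_Ico_pow X (by lia), revAt_le (by lia)]
        ring
    _ = p.reflect r - X ^ e * p := by
        rw [sum_sub_distrib, ← mul_sum, ← reflect_eq_sum_range, ← p.as_sum_range_C_mul_X_pow]

end Reflect

section Incidence

variable {α : Type*}

/-- The element of Mathlib's incidence algebra with the same values as `a` on the intervals
`s ≤ t`. -/
noncomputable def toIncidenceAlgebra {R : Type*} [Zero R] [LE α] (a : α → α → R) :
    IncidenceAlgebra R α where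
  toFun s t := if s ≤ t then a s t else 0
  eq_zero_of_not_le' _ _ h := if_neg h

theorem toIncidenceAlgebra_apply {R : Type*} [Zero R] [LE α] (a : α → α → R) {s t : α}
    (h : s ≤ t) : toIncidenceAlgebra a s t = a s t :=
  if_pos h

theorem lt_induction_Ioo [Preorder α] [LocallyFiniteOrder α] {s : α}
    {motive : ∀ t, s < t → Prop}
    (step : ∀ t hst, (∀ w (hw : w ∈ Ioo s t), motive w (mem_Ioo.1 hw).1) → motive t hst)
    {t : α} (hst : s < t) : motive t hst := by
  induction hn : #(Ioo s t) using Nat.strong_induction_on generalizing t with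
  | _ n ih =>
    refine step t hst fun w hw => ih _ ?_ (mem_Ioo.1 hw).1 rfl
    have hsub : Ioo s w ⊂ Ioo s t :=
      ⟨Ioo_subset_Ioo_right (mem_Ioo.1 hw).2.le, fun h => right_notMem_Ioo (h hw)⟩
    exact hn ▸ card_lt_card hsub

theorem IsWeakRank.self [Preorder α] {ρ : α → α → ℕ} (hρ : IsWeakRank ρ) (s : α) :
    ρ s s = 0 := by
  simpa using hρ.add (le_refl s) (le_refl s)

variable [PartialOrder α] [LocallyFiniteOrder α]

theorem toIncidenceAlgebra_mul_apply (a b : α → α → ℤ[X]) (s t : α) :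
    (toIncidenceAlgebra a * toIncidenceAlgebra b) s t = conv a b s t := by
  rw [IncidenceAlgebra.mul_apply, conv]
  refine sum_congr rfl fun w hw => ?_
  rw [toIncidenceAlgebra_apply a (mem_Icc.1 hw).1, toIncidenceAlgebra_apply b (mem_Icc.1 hw).2]

theorem sum_Icc_eq_add_sum_Ioo_add {M : Type*} [AddCommMonoid M] (F : α → M) {s t : α}
    (h : s < t) : ∑ w ∈ Icc s t, F w = F s + ∑ w ∈ Ioo s t, F w + F t := by
  rw [add_sum_Ioo_eq_sum_Ico h, sum_Ico_add_eq_sum_Icc h.le]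

variable {ρ : α → α → ℕ} {κ f H : α → α → ℤ[X]}

/-- At `x = 1` the relation `κ⁻¹ = κ^rev` says that `κ` is an involution; being `1` on the diagonal,
it is the identity there. -/
theorem IsKernel.eval_one (hκ : IsKernel ρ κ) {s t : α} (hst : s < t) : (κ s t).eval 1 = 0 := by
  induction hst using lt_induction_Ioo with
  | step t hst ih =>
    have hrev : ∀ {u v : α}, u ≤ v → (rev ρ κ u v).eval 1 = (κ u v).eval 1 :=
      fun h => eval_one_reflect (hκ.degLE h)
    have hsum : ∑ w ∈ Ioo s t, (κ s w * rev ρ κ w t).eval 1 = 0 :=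
      sum_eq_zero fun w hw => by rw [eval_mul, ih w hw, zero_mul]
    have hdouble : (κ s t).eval 1 + (κ s t).eval 1 = 0 := by
      have h := congrArg (eval 1) (hκ.right hst.le)
      rw [conv, sum_Icc_eq_add_sum_Ioo_add _ hst, eval_add, eval_add, eval_finsetSum, hsum,
        eval_mul, eval_mul, hrev hst.le, hrev le_rfl, hκ.diag, hκ.diag] at h
      simpa [dlt, hst.ne] using h
    lia

theorem IsKernel.toIncidenceAlgebra_eq (hκ : IsKernel ρ κ) :
    toIncidenceAlgebra κ = (X - 1 : ℤ[X]) • toIncidenceAlgebra (red κ) + (X : ℤ[X]) • 1 := by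
  ext1 s t hst
  rw [IncidenceAlgebra.add_apply, IncidenceAlgebra.constSMul_apply,
    IncidenceAlgebra.constSMul_apply, IncidenceAlgebra.one_apply, toIncidenceAlgebra_apply _ hst,
    toIncidenceAlgebra_apply _ hst, red]
  rcases hst.eq_or_lt with rfl | hlt
  · simp [hκ.diag]
  · have hdiv : (X - C 1) * (κ s t /ₘ (X - C 1)) = κ s t :=
      mul_divByMonic_eq_iff_isRoot.2 (hκ.eval_one hlt)
    simpa [hlt.ne] using hdiv.symm

theorem IsRightKLS.toIncidenceAlgebra_rev (hf : IsRightKLS ρ κ f) :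
    toIncidenceAlgebra (rev ρ f) = toIncidenceAlgebra κ * toIncidenceAlgebra f := by
  ext1 s t hst
  rw [toIncidenceAlgebra_apply _ hst, toIncidenceAlgebra_mul_apply, hf.rev_eq hst]

theorem IsChow.toIncidenceAlgebra_mul_red (hH : IsChow κ H) :
    toIncidenceAlgebra H * toIncidenceAlgebra (red κ) = (-1 : ℤ[X]) • 1 := by
  ext1 s t hst
  rw [toIncidenceAlgebra_mul_apply, hH.right hst, IncidenceAlgebra.constSMul_apply,
    IncidenceAlgebra.one_apply, dlt, neg_one_smul]

theorem IsChow.toIncidenceAlgebra_mul_rev_sub (hκ : IsKernel ρ κ) (hH : IsChow κ H)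
    (hf : IsRightKLS ρ κ f) :
    toIncidenceAlgebra H * (toIncidenceAlgebra (rev ρ f) - (X : ℤ[X]) • toIncidenceAlgebra f) =
      (1 - X : ℤ[X]) • toIncidenceAlgebra f := by
  calc _ = toIncidenceAlgebra H *
        ((X - 1 : ℤ[X]) • (toIncidenceAlgebra (red κ) * toIncidenceAlgebra f)) := by
        rw [hf.toIncidenceAlgebra_rev, hκ.toIncidenceAlgebra_eq, add_mul, smul_one_mul,
          add_sub_cancel_right, smul_mul_assoc]
    _ = (X - 1 : ℤ[X]) • (-1 : ℤ[X]) • toIncidenceAlgebra f := by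
        rw [mul_smul_comm, ← mul_assoc, hH.toIncidenceAlgebra_mul_red, smul_one_mul]
    _ = (1 - X : ℤ[X]) • toIncidenceAlgebra f := by
        rw [smul_smul, mul_neg_one, neg_sub]

theorem IsChow.diag (hH : IsChow κ H) (s : α) : H s s = 1 := by
  simpa [conv, red, dlt] using hH.right (le_refl s)

theorem IsChow.sub_one_mul_apply (hρ : IsWeakRank ρ) (hκ : IsKernel ρ κ) (hH : IsChow κ H)
    (hf : IsRightKLS ρ κ f) {s t : α} (hst : s < t) :
    (X - 1) * H s t = (rev ρ f s t - f s t) +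
      ∑ w ∈ Ioo s t, H s w * (rev ρ f w t - X * f w t) := by
  have h : ∑ w ∈ Icc s t, H s w * (rev ρ f w t - X * f w t) = (1 - X) * f s t := by
    have h := congrArg (· s t) (hH.toIncidenceAlgebra_mul_rev_sub hκ hf)
    simp only [IncidenceAlgebra.mul_apply, IncidenceAlgebra.sub_apply,
      IncidenceAlgebra.constSMul_apply, toIncidenceAlgebra_apply _ hst.le, smul_eq_mul] at h
    rw [← h]
    refine sum_congr rfl fun w hw => ?_
    obtain ⟨hsw, hwt⟩ := mem_Icc.1 hw
    simp only [toIncidenceAlgebra_apply _ hsw, toIncidenceAlgebra_apply _ hwt]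
  have hrev : rev ρ f t t = 1 := by simp [rev, hf.diag, hρ.self]
  rw [sum_Icc_eq_add_sum_Ioo_add _ hst, hH.diag, hf.diag, hrev] at h
  linear_combination -h

/-- Since `ρ_{st} > 0` for `s < t`, the subtraction is exact: the centre of symmetry of `H_{st}` is
`(ρ_{st} - 1) / 2`. -/
theorem IsChow.apply_mem_symmUnimodalCone (hρ : IsWeakRank ρ) (hκ : IsKernel ρ κ)
    (hH : IsChow κ H) (hf : IsRightKLS ρ κ f) (hpos : ∀ s t, s ≤ t → PolyNonneg (f s t)) {s t : α}
    (hst : s < t) : H s t ∈ symmUnimodalCone (ρ s t - 1) := by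
  induction hst using lt_induction_Ioo with
  | step t hst ih =>
    have hρst : 0 < ρ s t := hρ.pos hst
    obtain ⟨A, hA, hA_eq⟩ : ∃ A ∈ symmUnimodalCone (ρ s t - 1),
        (X - 1) * A = rev ρ f s t - f s t := by
      have hdeg : 2 * (f s t).natDegree + 0 ≤ ρ s t := (hf.degLT hst).le
      simpa [rev] using
        exists_mem_symmUnimodalCone_sub_one_mul_eq (d := ρ s t - 1) (hpos s t hst.le) hdeg (by lia)
    have hquot : ∀ w ∈ Ioo s t, ∃ B ∈ symmUnimodalCone (ρ w t),
        (X - 1) * B = rev ρ f w t - X * f w t := fun w hw => by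
      obtain ⟨-, hwt⟩ := mem_Ioo.1 hw
      simpa [rev] using
        exists_mem_symmUnimodalCone_sub_one_mul_eq (e := 1) (hpos w t hwt.le) (hf.degLT hwt) rfl
    choose! B hB hB_eq using hquot
    have hrec : H s t = A + ∑ w ∈ Ioo s t, H s w * B w := by
      apply mul_left_cancel₀ (X_sub_C_ne_zero (1 : ℤ))
      rw [C_1, hH.sub_one_mul_apply hρ hκ hf hst, mul_add, hA_eq, mul_sum]
      congr 1
      exact sum_congr rfl fun w hw => by rw [← hB_eq w hw, mul_left_comm]
    rw [hrec]
    refine add_mem hA (sum_mem fun w hw => ?_)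
    obtain ⟨hsw, hwt⟩ := mem_Ioo.1 hw
    have hadd : ρ s t - 1 = (ρ s w - 1) + ρ w t := by
      have := hρ.pos hsw
      have := hρ.add hsw.le hwt.le
      lia
    exact hadd ▸ mul_mem_symmUnimodalCone (ih w hw) (hB w hw)

theorem IsChow.polyNonneg_and_polyUnimodal (hρ : IsWeakRank ρ) (hκ : IsKernel ρ κ)
    (hH : IsChow κ H) (hf : IsRightKLS ρ κ f) (hpos : ∀ s t, s ≤ t → PolyNonneg (f s t)) {s t : α}
    (hst : s ≤ t) : PolyNonneg (H s t) ∧ PolyUnimodal (H s t) := by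
  rcases hst.eq_or_lt with rfl | hlt
  · exact polyNonneg_and_polyUnimodal_of_mem_symmUnimodalCone
      (hH.diag s ▸ one_mem_symmUnimodalCone_zero)
  · exact polyNonneg_and_polyUnimodal_of_mem_symmUnimodalCone
      (hH.apply_mem_symmUnimodalCone hρ hκ hf hpos hlt)

end Incidence

section Duality

open OrderDual

variable {α : Type*}

/-- The function on intervals of the order dual corresponding to `a`: the interval `[s, t]` of `αᵒᵈ`
is the interval `[t, s]` of `α`. -/
def intervalDual {M : Type*} (a : α → α → M) : αᵒᵈ → αᵒᵈ → M :=
  fun s t => a (ofDual t) (ofDual s)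

variable [PartialOrder α]

theorem dlt_orderDual : (dlt : αᵒᵈ → αᵒᵈ → ℤ[X]) = intervalDual dlt := by
  funext s t
  simp [dlt, intervalDual, eq_comm]

theorem red_intervalDual (κ : α → α → ℤ[X]) : red (intervalDual κ) = intervalDual (red κ) := by
  funext s t
  simp [red, intervalDual, eq_comm]

theorem IsWeakRank.dual {ρ : α → α → ℕ} (hρ : IsWeakRank ρ) : IsWeakRank (intervalDual ρ) where
  pos _ _ h := hρ.pos h
  add _ _ _ h₁ h₂ := (hρ.add h₂ h₁).trans (add_comm _ _)

variable [LocallyFiniteOrder α]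

theorem conv_intervalDual (a b : α → α → ℤ[X]) :
    conv (intervalDual a) (intervalDual b) = intervalDual (conv b a) := by
  funext s t
  simp only [conv, intervalDual, Icc_orderDual_def, sum_map]
  exact sum_congr rfl fun w _ => mul_comm _ _

variable {ρ : α → α → ℕ} {κ g H : α → α → ℤ[X]}

theorem IsKernel.dual (hκ : IsKernel ρ κ) : IsKernel (intervalDual ρ) (intervalDual κ) where
  degLE _ _ h := hκ.degLE h
  diag s := hκ.diag (ofDual s)
  left s t h := by
    rw [dlt_orderDual]
    exact (congrFun₂ (conv_intervalDual (rev ρ κ) κ) s t).trans (hκ.right h)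
  right s t h := by
    rw [dlt_orderDual]
    exact (congrFun₂ (conv_intervalDual κ (rev ρ κ)) s t).trans (hκ.left h)

theorem IsChow.dual (hH : IsChow κ H) : IsChow (intervalDual κ) (intervalDual H) where
  left s t h := by
    rw [red_intervalDual, conv_intervalDual, dlt_orderDual]
    exact hH.right h
  right s t h := by
    rw [red_intervalDual, conv_intervalDual, dlt_orderDual]
    exact hH.left h

theorem IsLeftKLS.dual (hg : IsLeftKLS ρ κ g) :
    IsRightKLS (intervalDual ρ) (intervalDual κ) (intervalDual g) where
  diag s := hg.diag (ofDual s)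
  degLT _ _ h := hg.degLT h
  rev_eq s t h := by
    rw [conv_intervalDual]
    exact hg.rev_eq h

end Duality

/-- Theorem 3.12: if either the right KLS function `f` or the left KLS function `g` of a kernel
`κ` is non-negative, then the Chow function `ℋ` is non-negative and unimodal. -/
theorem chow_nonneg_unimodal_of_kls_nonneg [PartialOrder α] [LocallyFiniteOrder α]
    (ρ : α → α → ℕ) (hρ : IsWeakRank ρ)
    (κ : α → α → Polynomial ℤ) (hκ : IsKernel ρ κ)
    (H : α → α → Polynomial ℤ) (hH : IsChow κ H)
    (f : α → α → Polynomial ℤ) (hf : IsRightKLS ρ κ f)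
    (g : α → α → Polynomial ℤ) (hg : IsLeftKLS ρ κ g)
    (hpos : (∀ s t : α, s ≤ t → PolyNonneg (f s t)) ∨ (∀ s t : α, s ≤ t → PolyNonneg (g s t))) :
    ∀ s t : α, s ≤ t → PolyNonneg (H s t) ∧ PolyUnimodal (H s t) := by
  intro s t hst
  rcases hpos with hf_nonneg | hg_nonneg
  · exact hH.polyNonneg_and_polyUnimodal hρ hκ hf hf_nonneg hst
  · exact hH.dual.polyNonneg_and_polyUnimodal hρ.dual hκ.dual hg.dual
      (fun u v huv => hg_nonneg _ _ huv) (OrderDual.toDual_le_toDual.2 hst)
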